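/- (Key estimate for Lemma on Λ₂.) There exists a constant C > 0 such that for all finitely supported functions a₁, a₂, a₃, d : ℤ×ℤ → [0,∞), Σ_{(q₁,q₂,q₃,k)∈ℤ⁴} d(q₁+q₂+q₃, −k) a₁(q₁,k) a₂(q₂,−k) a₃(q₃,−k) ≤ C ‖⟨q+k²⟩^{3/8}⟨k⟩ d‖_{ℓ²(ℤ²)} · ‖⟨q−k²⟩^{3/8}⟨k⟩^{−1/3} a₁‖_{ℓ²(ℤ²)} · ‖⟨q+k²⟩^{3/8}⟨k⟩^{−1/3} a₂‖_{ℓ²(ℤ²)} · ‖⟨q+k²⟩^{3/8}⟨k⟩^{−1/3} a₃‖_{ℓ²(ℤ²)}. -/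

import Mathlib

/-!
For fixed `k`, translating `q₁ = m₁ + k²`, `q₂ = m₂ - k²`, `q₃ = m₃ - k²` gives
`q₁ + q₂ + q₃ + k² = m₁ + m₂ + m₃`, so there is no resonance left and the powers of `⟨k⟩` cancel
exactly (`1 = 3 · 1/3`). Write each function as `F = ⟨·⟩^{3/8}⟨k⟩^s a` times the weight
`g = ⟨·⟩^{-3/8}` (and the `k`-weight), and apply Cauchy–Schwarz to the grouping
`(F₀ F₁ g₂ g₃) · (F₂ F₃ g₀ g₁)`. In each squared factor the two weights are summed along a line, on
which `∑ g(e₁ n)² g(e₂ n)² ≤ ∑ g⁴ = ∑ ⟨n⟩^{-3/2} < ∞` for bijections `e₁, e₂`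
(`tsum_weight_le`); what remains is the product of two squared `ℓ²` norms on a common `k`-fibre,
which `tsum_fiber_le` bounds by the product of the full norms.

The sums are handled in `ℝ≥0∞`, where they may be reordered freely (`core`), and finiteness of
the supports allows passing back to real sums.
-/

noncomputable section

open Real

/-- The Japanese bracket `⟨m⟩ = (1+m²)^{1/2}`. -/
def jap (m : ℤ) : ℝ := Real.sqrt (1 + (m : ℝ) ^ 2)

/-- The weighted `ℓ²(ℤ²)` norm `‖⟨q+k²⟩^b ⟨k⟩^s a‖_{ℓ²}`. -/
def wplus (b s : ℝ) (a : ℤ × ℤ → ℝ) : ℝ :=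
  (∑' p : ℤ × ℤ, (jap (p.1 + p.2 ^ 2) ^ b * jap p.2 ^ s * a p) ^ 2) ^ ((1:ℝ)/2)

/-- The weighted `ℓ²(ℤ²)` norm `‖⟨q−k²⟩^b ⟨k⟩^s a‖_{ℓ²}` (the conjugate weight). -/
def wminus (b s : ℝ) (a : ℤ × ℤ → ℝ) : ℝ :=
  (∑' p : ℤ × ℤ, (jap (p.1 - p.2 ^ 2) ^ b * jap p.2 ^ s * a p) ^ 2) ^ ((1:ℝ)/2)

open scoped ENNReal

/-- Cauchy–Schwarz for sums in `ℝ≥0∞`. -/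
theorem cs_tsum {ι : Type*} (f g : ι → ℝ≥0∞) :
    ∑' i, f i * g i ≤ (∑' i, f i ^ 2) ^ ((1:ℝ)/2) * (∑' i, g i ^ 2) ^ ((1:ℝ)/2) := by
  let _ : MeasurableSpace ι := ⊤
  have h := ENNReal.lintegral_mul_le_Lp_mul_Lq (MeasureTheory.Measure.count (α := ι))
    Real.HolderConjugate.two_two (f := f) (g := g)
    measurable_from_top.aemeasurable measurable_from_top.aemeasurable
  simpa [MeasureTheory.lintegral_count' measurable_from_top] using h

theorem tsum_weight_le (g : ℤ → ℝ≥0∞) (e₁ e₂ : ℤ ≃ ℤ) :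
    ∑' n, g (e₁ n) ^ 2 * g (e₂ n) ^ 2 ≤ ∑' n, g n ^ 4 := by
  have h := cs_tsum (fun n => g (e₁ n) ^ 2) (fun n => g (e₂ n) ^ 2)
  simp only [← pow_mul] at h
  rw [e₁.tsum_eq (fun n => g n ^ (2 * 2)), e₂.tsum_eq (fun n => g n ^ (2 * 2)),
    ← ENNReal.rpow_add_of_nonneg _ _ (by norm_num) (by norm_num)] at h
  norm_num at h
  exact h

/-- The sum over `k` of a product of two fibre sums is at most the product of the full sums;
`σ` and `τ` account for the sign of `k`. -/
theorem tsum_fiber_le (F H : ℤ × ℤ → ℝ≥0∞) (σ τ : ℤ ≃ ℤ) :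
    ∑' k, (∑' q, F (q, σ k)) * (∑' q, H (q, τ k)) ≤ (∑' p, F p) * (∑' p, H p) := by
  have hF : ∑' k, ∑' q, F (q, σ k) = ∑' p, F p := by
    rw [σ.tsum_eq (fun k => ∑' q, F (q, k)), ENNReal.tsum_comm, ENNReal.tsum_prod']
  have hH : ∑' k, ∑' q, H (q, τ k) = ∑' p, H p := by
    rw [τ.tsum_eq (fun k => ∑' q, H (q, k)), ENNReal.tsum_comm, ENNReal.tsum_prod']
  calc _ ≤ ∑' k, (∑' q, F (q, σ k)) * (∑' p, H p) := by
        refine ENNReal.tsum_le_tsum fun k => mul_le_mul_right ?_ _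
        rw [← hH]
        exact ENNReal.le_tsum (f := fun k => ∑' q, H (q, τ k)) k
    _ = _ := by rw [ENNReal.tsum_mul_right, hF]

theorem tsum_four (f : ℤ × ℤ × ℤ × ℤ → ℝ≥0∞) :
    ∑' m, f m = ∑' k, ∑' q₁, ∑' q₂, ∑' q₃, f (q₁, q₂, q₃, k) := by
  simp only [ENNReal.tsum_prod']
  calc _ = ∑' q₁, ∑' q₂, ∑' k, ∑' q₃, f (q₁, q₂, q₃, k) := by
        refine tsum_congr fun q₁ => tsum_congr fun q₂ => ENNReal.tsum_comm
    _ = ∑' q₁, ∑' k, ∑' q₂, ∑' q₃, f (q₁, q₂, q₃, k) := by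
        refine tsum_congr fun q₁ => ENNReal.tsum_comm
    _ = _ := ENNReal.tsum_comm

/-- First Cauchy–Schwarz factor: the weights sit on `q₂, q₃`, and the inner sum is over `q₂` with
`q = q₁ + q₂ + q₃` fixed. -/
theorem factor_one (F₀ F₁ : ℤ × ℤ → ℝ≥0∞) (g : ℤ → ℝ≥0∞) :
    ∑' m : ℤ × ℤ × ℤ × ℤ, (F₀ (m.1 + m.2.1 + m.2.2.1, -m.2.2.2) * F₁ (m.1, m.2.2.2) *
        (g (m.2.1 + m.2.2.2 ^ 2) * g (m.2.2.1 + m.2.2.2 ^ 2))) ^ 2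
      ≤ (∑' n, g n ^ 4) * ((∑' p, F₀ p ^ 2) * (∑' p, F₁ p ^ 2)) := by
  rw [tsum_four]
  calc _ = ∑' k : ℤ, ∑' q₁ : ℤ, ∑' q : ℤ, F₁ (q₁, k) ^ 2 * F₀ (q, -k) ^ 2 *
        ∑' q₂ : ℤ, g (q₂ + k ^ 2) ^ 2 * g (q - q₁ - q₂ + k ^ 2) ^ 2 := by
        refine tsum_congr fun k => tsum_congr fun q₁ => ?_
        simp only [← ENNReal.tsum_mul_left]
        rw [ENNReal.tsum_comm (f := fun q q₂ => F₁ (q₁, k) ^ 2 * F₀ (q, -k) ^ 2 *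
          (g (q₂ + k ^ 2) ^ 2 * g (q - q₁ - q₂ + k ^ 2) ^ 2))]
        refine tsum_congr fun q₂ => ?_
        rw [← (Equiv.addLeft (q₁ + q₂)).tsum_eq (fun q => F₁ (q₁, k) ^ 2 * F₀ (q, -k) ^ 2 *
          (g (q₂ + k ^ 2) ^ 2 * g (q - q₁ - q₂ + k ^ 2) ^ 2))]
        refine tsum_congr fun q₃ => ?_
        have e : q₁ + q₂ + q₃ - q₁ - q₂ = q₃ := by ring
        simp only [Equiv.coe_addLeft, e]
        ring
    _ ≤ ∑' k : ℤ, ∑' q₁ : ℤ, ∑' q : ℤ, F₁ (q₁, k) ^ 2 * F₀ (q, -k) ^ 2 * ∑' n, g n ^ 4 := by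
        refine ENNReal.tsum_le_tsum fun k => ENNReal.tsum_le_tsum fun q₁ =>
          ENNReal.tsum_le_tsum fun q => mul_le_mul_right ?_ _
        refine le_trans (le_of_eq (tsum_congr fun n => ?_))
          (tsum_weight_le g (Equiv.addRight (k ^ 2)) (Equiv.subLeft (q - q₁ + k ^ 2)))
        have e : q - q₁ - n + k ^ 2 = q - q₁ + k ^ 2 - n := by ring
        simp only [Equiv.coe_addRight, Equiv.subLeft_apply, e]
    _ = (∑' n, g n ^ 4) * ∑' k : ℤ, (∑' q, F₀ (q, -k) ^ 2) * (∑' q, F₁ (q, k) ^ 2) := by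
        simp only [ENNReal.tsum_mul_right, ENNReal.tsum_mul_left]
        rw [mul_comm]
        congr 1
        exact tsum_congr fun k => mul_comm _ _
    _ ≤ _ := by
        gcongr
        exact tsum_fiber_le (fun p => F₀ p ^ 2) (fun p => F₁ p ^ 2) (Equiv.neg ℤ) (Equiv.refl ℤ)

/-- Second Cauchy–Schwarz factor: the weights sit on `q₁ + q₂ + q₃` and `q₁`, and the inner sum is
over `q₁`. -/
theorem factor_two (F₂ F₃ : ℤ × ℤ → ℝ≥0∞) (g : ℤ → ℝ≥0∞) :
    ∑' m : ℤ × ℤ × ℤ × ℤ, (F₂ (m.2.1, -m.2.2.2) * F₃ (m.2.2.1, -m.2.2.2) *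
        (g (m.1 + m.2.1 + m.2.2.1 + m.2.2.2 ^ 2) * g (m.1 - m.2.2.2 ^ 2))) ^ 2
      ≤ (∑' n, g n ^ 4) * ((∑' p, F₂ p ^ 2) * (∑' p, F₃ p ^ 2)) := by
  rw [tsum_four]
  calc _ = ∑' k : ℤ, ∑' q₂ : ℤ, ∑' q₃ : ℤ, F₂ (q₂, -k) ^ 2 * F₃ (q₃, -k) ^ 2 *
        ∑' q₁ : ℤ, g (q₁ + q₂ + q₃ + k ^ 2) ^ 2 * g (q₁ - k ^ 2) ^ 2 := by
        refine tsum_congr fun k => ?_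
        rw [ENNReal.tsum_comm]
        refine tsum_congr fun q₂ => ?_
        rw [ENNReal.tsum_comm]
        refine tsum_congr fun q₃ => ?_
        rw [← ENNReal.tsum_mul_left]
        refine tsum_congr fun q₁ => ?_
        ring
    _ ≤ ∑' k : ℤ, ∑' q₂ : ℤ, ∑' q₃ : ℤ, F₂ (q₂, -k) ^ 2 * F₃ (q₃, -k) ^ 2 *
        ∑' n, g n ^ 4 := by
        refine ENNReal.tsum_le_tsum fun k => ENNReal.tsum_le_tsum fun q₂ =>
          ENNReal.tsum_le_tsum fun q₃ => mul_le_mul_right ?_ _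
        refine le_trans (le_of_eq (tsum_congr fun n => ?_))
          (tsum_weight_le g (Equiv.addRight (q₂ + q₃ + k ^ 2)) (Equiv.subRight (k ^ 2)))
        have e : n + q₂ + q₃ + k ^ 2 = n + (q₂ + q₃ + k ^ 2) := by ring
        simp only [Equiv.coe_addRight, Equiv.subRight_apply, e]
    _ = (∑' n, g n ^ 4) * ∑' k : ℤ, (∑' q, F₂ (q, -k) ^ 2) * (∑' q, F₃ (q, -k) ^ 2) := by
        simp only [ENNReal.tsum_mul_right, ENNReal.tsum_mul_left]
        rw [mul_comm]
    _ ≤ _ := by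
        gcongr
        exact tsum_fiber_le (fun p => F₂ p ^ 2) (fun p => F₃ p ^ 2) (Equiv.neg ℤ) (Equiv.neg ℤ)

/-- The quadrilinear estimate for arbitrary `ℝ≥0∞`-valued functions and an arbitrary weight `g`. -/
theorem core (F₀ F₁ F₂ F₃ : ℤ × ℤ → ℝ≥0∞) (g : ℤ → ℝ≥0∞) :
    ∑' m : ℤ × ℤ × ℤ × ℤ,
      (F₀ (m.1 + m.2.1 + m.2.2.1, -m.2.2.2) * F₁ (m.1, m.2.2.2) *
        (g (m.2.1 + m.2.2.2 ^ 2) * g (m.2.2.1 + m.2.2.2 ^ 2))) *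
      (F₂ (m.2.1, -m.2.2.2) * F₃ (m.2.2.1, -m.2.2.2) *
        (g (m.1 + m.2.1 + m.2.2.1 + m.2.2.2 ^ 2) * g (m.1 - m.2.2.2 ^ 2)))
      ≤ (∑' n, g n ^ 4) * (∑' p, F₀ p ^ 2) ^ ((1:ℝ)/2) * (∑' p, F₁ p ^ 2) ^ ((1:ℝ)/2) *
        (∑' p, F₂ p ^ 2) ^ ((1:ℝ)/2) * (∑' p, F₃ p ^ 2) ^ ((1:ℝ)/2) := by
  have h2 : (0:ℝ) ≤ 1/2 := by norm_num
  have hG : (∑' n, g n ^ 4) ^ ((1:ℝ)/2) * (∑' n, g n ^ 4) ^ ((1:ℝ)/2) = ∑' n, g n ^ 4 := by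
    rw [← ENNReal.rpow_add_of_nonneg _ _ h2 h2]
    norm_num
  refine (cs_tsum _ _).trans ((mul_le_mul' (ENNReal.rpow_le_rpow (factor_one F₀ F₁ g) h2)
    (ENNReal.rpow_le_rpow (factor_two F₂ F₃ g) h2)).trans (le_of_eq ?_))
  simp only [ENNReal.mul_rpow_of_nonneg _ _ h2]
  conv_rhs => rw [← hG]
  ring

theorem jap_pos (m : ℤ) : 0 < jap m := Real.sqrt_pos.2 (by positivity)

theorem jap_neg (m : ℤ) : jap (-m) = jap m := by simp [jap]

theorem abs_le_jap (m : ℤ) : |(m : ℝ)| ≤ jap m :=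
  Real.abs_le_sqrt (by linarith)

theorem summable_jap : Summable fun n : ℤ => (jap n ^ (-(3/8) : ℝ)) ^ 4 := by
  refine Summable.of_norm_bounded_eventually
    (Real.summable_abs_int_rpow (b := 3/2) (by norm_num)) ?_
  -- `n = 0` is excluded: there `|n| ^ (-3/2)` takes the junk value `0`.
  filter_upwards [(Set.finite_singleton (0:ℤ)).compl_mem_cofinite] with n hn
  have hn' : (n : ℝ) ≠ 0 := by exact_mod_cast hn
  have hp := jap_pos n
  rw [Real.norm_of_nonneg (by positivity), ← Real.rpow_natCast, ← Real.rpow_mul hp.le]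
  norm_num
  exact Real.rpow_le_rpow_of_nonpos (abs_pos.2 hn') (abs_le_jap n) (by norm_num)

/-- Conversion of a weighted `ℓ²` norm of a finitely supported function to an `ℝ≥0∞` sum. -/
theorem ofReal_weighted_norm (w a : ℤ × ℤ → ℝ) (hw : ∀ p, 0 ≤ w p) (ha : ∀ p, 0 ≤ a p)
    (hs : (Function.support a).Finite) :
    (∑' p, ENNReal.ofReal (w p * a p) ^ 2) ^ ((1:ℝ)/2)
      = ENNReal.ofReal ((∑' p, (w p * a p) ^ 2) ^ ((1:ℝ)/2)) := by
  have hsum : Summable fun p => (w p * a p) ^ 2 := by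
    refine summable_of_hasFiniteSupport (hs.subset fun p hp => ?_)
    contrapose! hp
    simp [Function.notMem_support.1 hp]
  rw [← ENNReal.ofReal_rpow_of_nonneg (tsum_nonneg fun p => sq_nonneg _) (by norm_num),
    ENNReal.ofReal_tsum_of_nonneg (fun p => sq_nonneg _) hsum]
  simp only [ENNReal.ofReal_pow (mul_nonneg (hw _) (ha _))]

/-- **Key quadrilinear estimate for `Λ₂`:**
`Σ_{(q₁,q₂,q₃,k)} d(q₁+q₂+q₃,−k) a₁(q₁,k) a₂(q₂,−k) a₃(q₃,−k)
  ≤ C ‖⟨q+k²⟩^{3/8}⟨k⟩ d‖_{ℓ²} ‖⟨q−k²⟩^{3/8}⟨k⟩^{−1/3} a₁‖_{ℓ²}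
      ‖⟨q+k²⟩^{3/8}⟨k⟩^{−1/3} a₂‖_{ℓ²} ‖⟨q+k²⟩^{3/8}⟨k⟩^{−1/3} a₃‖_{ℓ²}`. -/
theorem key_estimate_Lambda2 :
    ∃ C > (0:ℝ), ∀ a₁ a₂ a₃ d : ℤ × ℤ → ℝ,
      (∀ p, 0 ≤ a₁ p) → (∀ p, 0 ≤ a₂ p) → (∀ p, 0 ≤ a₃ p) → (∀ p, 0 ≤ d p) →
      (Function.support a₁).Finite → (Function.support a₂).Finite →
      (Function.support a₃).Finite → (Function.support d).Finite →
      (∑' m : ℤ × ℤ × ℤ × ℤ,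
          d (m.1 + m.2.1 + m.2.2.1, -m.2.2.2) * a₁ (m.1, m.2.2.2) *
            a₂ (m.2.1, -m.2.2.2) * a₃ (m.2.2.1, -m.2.2.2))
        ≤ C * wplus (3/8) 1 d * wminus (3/8) (-(1/3)) a₁ *
            wplus (3/8) (-(1/3)) a₂ * wplus (3/8) (-(1/3)) a₃ := by
  refine ⟨(∑' n : ℤ, (jap n ^ (-(3/8) : ℝ)) ^ 4) + 1, ?_, ?_⟩
  · have : 0 ≤ ∑' n : ℤ, (jap n ^ (-(3/8) : ℝ)) ^ 4 :=
      tsum_nonneg fun n => by have := jap_pos n; positivity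
    linarith
  intro a₁ a₂ a₃ d h₁ h₂ h₃ hd s₁ s₂ s₃ sd
  have hG0 : 0 ≤ ∑' n : ℤ, (jap n ^ (-(3/8) : ℝ)) ^ 4 :=
    tsum_nonneg fun n => by have := jap_pos n; positivity
  have hplus : ∀ b s a, 0 ≤ wplus b s a := fun b s a =>
    Real.rpow_nonneg (tsum_nonneg fun p => sq_nonneg _) _
  have hminus : ∀ b s a, 0 ≤ wminus b s a := fun b s a =>
    Real.rpow_nonneg (tsum_nonneg fun p => sq_nonneg _) _
  have hR := hplus (3/8) 1 d
  have hR₁ := hminus (3/8) (-(1/3)) a₁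
  have hR₂ := hplus (3/8) (-(1/3)) a₂
  have hR₃ := hplus (3/8) (-(1/3)) a₃
  by_cases hS : Summable fun m : ℤ × ℤ × ℤ × ℤ =>
          d (m.1 + m.2.1 + m.2.2.1, -m.2.2.2) * a₁ (m.1, m.2.2.2) *
            a₂ (m.2.1, -m.2.2.2) * a₃ (m.2.2.1, -m.2.2.2)
  swap
  · rw [tsum_eq_zero_of_not_summable hS]
    positivity
  have hwp : ∀ (b s : ℝ) (p : ℤ × ℤ), 0 ≤ jap (p.1 + p.2 ^ 2) ^ b * jap p.2 ^ s := fun b s p =>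
    mul_nonneg (Real.rpow_nonneg (jap_pos _).le _) (Real.rpow_nonneg (jap_pos _).le _)
  have hwm : ∀ (b s : ℝ) (p : ℤ × ℤ), 0 ≤ jap (p.1 - p.2 ^ 2) ^ b * jap p.2 ^ s := fun b s p =>
    mul_nonneg (Real.rpow_nonneg (jap_pos _).le _) (Real.rpow_nonneg (jap_pos _).le _)
  have key := core
    (fun p => ENNReal.ofReal (jap (p.1 + p.2 ^ 2) ^ (3/8 : ℝ) * jap p.2 ^ (1:ℝ) * d p))
    (fun p => ENNReal.ofReal (jap (p.1 - p.2 ^ 2) ^ (3/8 : ℝ) * jap p.2 ^ (-(1/3) : ℝ) * a₁ p))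
    (fun p => ENNReal.ofReal (jap (p.1 + p.2 ^ 2) ^ (3/8 : ℝ) * jap p.2 ^ (-(1/3) : ℝ) * a₂ p))
    (fun p => ENNReal.ofReal (jap (p.1 + p.2 ^ 2) ^ (3/8 : ℝ) * jap p.2 ^ (-(1/3) : ℝ) * a₃ p))
    (fun n => ENNReal.ofReal (jap n ^ (-(3/8) : ℝ)))
  rw [ofReal_weighted_norm _ d (hwp _ _) hd sd, ofReal_weighted_norm _ a₁ (hwm _ _) h₁ s₁,
    ofReal_weighted_norm _ a₂ (hwp _ _) h₂ s₂, ofReal_weighted_norm _ a₃ (hwp _ _) h₃ s₃] at key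
  have hG : ∑' n : ℤ, ENNReal.ofReal (jap n ^ (-(3/8) : ℝ)) ^ 4
      = ENNReal.ofReal (∑' n : ℤ, (jap n ^ (-(3/8) : ℝ)) ^ 4) := by
    rw [ENNReal.ofReal_tsum_of_nonneg (fun n => by have := jap_pos n; positivity) summable_jap]
    exact tsum_congr fun n => (ENNReal.ofReal_pow (Real.rpow_nonneg (jap_pos n).le _) 4).symm
  rw [hG] at key
  change _ ≤ ENNReal.ofReal _ * ENNReal.ofReal (wplus (3/8) 1 d) *
    ENNReal.ofReal (wminus (3/8) (-(1/3)) a₁) * ENNReal.ofReal (wplus (3/8) (-(1/3)) a₂) *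
    ENNReal.ofReal (wplus (3/8) (-(1/3)) a₃) at key
  rw [← ENNReal.ofReal_mul hG0, ← ENNReal.ofReal_mul (by positivity),
    ← ENNReal.ofReal_mul (by positivity), ← ENNReal.ofReal_mul (by positivity)] at key
  refine le_trans ?_ (show (∑' n : ℤ, (jap n ^ (-(3/8) : ℝ)) ^ 4) * wplus (3/8) 1 d *
    wminus (3/8) (-(1/3)) a₁ * wplus (3/8) (-(1/3)) a₂ * wplus (3/8) (-(1/3)) a₃ ≤ _ by
      gcongr; linarith)
  rw [← ENNReal.ofReal_le_ofReal_iff (by positivity)]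
  refine le_trans (le_of_eq ?_) key
  rw [ENNReal.ofReal_tsum_of_nonneg (fun m => mul_nonneg (mul_nonneg (mul_nonneg (hd _) (h₁ _))
    (h₂ _)) (h₃ _)) hS]
  refine tsum_congr fun ⟨q₁, q₂, q₃, k⟩ => ?_
  have hg : ∀ n, 0 ≤ jap n ^ (-(3/8) : ℝ) := fun n => Real.rpow_nonneg (jap_pos n).le _
  have hg' : ∀ n, 0 ≤ jap n ^ (3/8 : ℝ) := fun n => Real.rpow_nonneg (jap_pos n).le _
  have hk : ∀ s : ℝ, 0 ≤ jap k ^ s := fun s => Real.rpow_nonneg (jap_pos k).le _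
  have hinv : ∀ n, jap n ^ (3/8 : ℝ) * jap n ^ (-(3/8) : ℝ) = 1 := fun n => by
    rw [← Real.rpow_add (jap_pos n)]
    norm_num
  have hkk : jap k ^ (1:ℝ) * jap k ^ (-(1/3) : ℝ) * jap k ^ (-(1/3) : ℝ) *
      jap k ^ (-(1/3) : ℝ) = 1 := by
    rw [← Real.rpow_add (jap_pos k), ← Real.rpow_add (jap_pos k), ← Real.rpow_add (jap_pos k)]
    norm_num
  simp only [jap_neg, neg_sq]
  have n0 := hd (q₁ + q₂ + q₃, -k)
  have n1 := h₁ (q₁, k)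
  have n2 := h₂ (q₂, -k)
  have n3 := h₃ (q₃, -k)
  have p0 := hg' (q₁ + q₂ + q₃ + k ^ 2)
  have p1 := hg' (q₁ - k ^ 2)
  have p2 := hg' (q₂ + k ^ 2)
  have p3 := hg' (q₃ + k ^ 2)
  have r0 := hg (q₁ + q₂ + q₃ + k ^ 2)
  have r1 := hg (q₁ - k ^ 2)
  have r2 := hg (q₂ + k ^ 2)
  have r3 := hg (q₃ + k ^ 2)
  have i0 := hinv (q₁ + q₂ + q₃ + k ^ 2)
  have i1 := hinv (q₁ - k ^ 2)
  have i2 := hinv (q₂ + k ^ 2)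
  have i3 := hinv (q₃ + k ^ 2)
  have k1 := hk 1
  have k2 := hk (-(1/3))
  generalize jap (q₁ + q₂ + q₃ + k ^ 2) ^ (3/8 : ℝ) = A0 at *
  generalize jap (q₁ - k ^ 2) ^ (3/8 : ℝ) = A1 at *
  generalize jap (q₂ + k ^ 2) ^ (3/8 : ℝ) = A2 at *
  generalize jap (q₃ + k ^ 2) ^ (3/8 : ℝ) = A3 at *
  generalize jap (q₁ + q₂ + q₃ + k ^ 2) ^ (-(3/8) : ℝ) = B0 at *
  generalize jap (q₁ - k ^ 2) ^ (-(3/8) : ℝ) = B1 at *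
  generalize jap (q₂ + k ^ 2) ^ (-(3/8) : ℝ) = B2 at *
  generalize jap (q₃ + k ^ 2) ^ (-(3/8) : ℝ) = B3 at *
  generalize jap k ^ (1:ℝ) = K at *
  generalize jap k ^ (-(1/3) : ℝ) = L at *
  generalize d (q₁ + q₂ + q₃, -k) = x0 at *
  generalize a₁ (q₁, k) = x1 at *
  generalize a₂ (q₂, -k) = x2 at *
  generalize a₃ (q₃, -k) = x3 at *
  rw [← ENNReal.ofReal_mul (by positivity), ← ENNReal.ofReal_mul (by positivity),
    ← ENNReal.ofReal_mul (by positivity), ← ENNReal.ofReal_mul (by positivity),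
    ← ENNReal.ofReal_mul (by positivity), ← ENNReal.ofReal_mul (by positivity),
    ← ENNReal.ofReal_mul (by positivity)]
  congr 1
  calc x0 * x1 * x2 * x3
      = (A0 * B0) * (A1 * B1) * (A2 * B2) * (A3 * B3) * (K * L * L * L) *
        (x0 * x1 * x2 * x3) := by rw [i0, i1, i2, i3, hkk]; ring
    _ = _ := by ring
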